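/- Let P, Q, R ∈ ℂ[z₁,z₂,z₃] be homogeneous polynomials with deg P + deg Q = 2·deg R, let Φ(z) = P(z)·conj(Q(z)) + Q(z)·conj(P(z)) + R(z)·conj(R(z)) and M = {(z,w) ∈ ℂ³×ℂ : Im w = Φ(z)}. Then M is holomorphically nondegenerate if and only if the Jacobian determinant J(P,Q,R), i.e. the determinant of the 3×3 matrix with entries ∂P/∂z_i, ∂Q/∂z_i, ∂R/∂z_i (i = 1,2,3), is not the zero polynomial. -/

import Mathlib

open MvPolynomial Complex

noncomputable section

/-- `Φ(z) = P(z)·conj(Q(z)) + Q(z)·conj(P(z)) + R(z)·conj(R(z))`, so that the model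
hypersurface is `M = {(z,w) : Im w = Φ(z)}`. -/
def Phi (P Q R : MvPolynomial (Fin 3) ℂ) (z : Fin 3 → ℂ) : ℂ :=
  eval z P * (starRingEnd ℂ) (eval z Q) + eval z Q * (starRingEnd ℂ) (eval z P) +
    eval z R * (starRingEnd ℂ) (eval z R)

/-- `Φ_j(z) = (∂P/∂z_j)(z)·conj(Q(z)) + (∂Q/∂z_j)(z)·conj(P(z)) + (∂R/∂z_j)(z)·conj(R(z))`. -/
def PhiD (P Q R : MvPolynomial (Fin 3) ℂ) (j : Fin 3) (z : Fin 3 → ℂ) : ℂ :=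
  eval z (pderiv j P) * (starRingEnd ℂ) (eval z Q) +
    eval z (pderiv j Q) * (starRingEnd ℂ) (eval z P) +
    eval z (pderiv j R) * (starRingEnd ℂ) (eval z R)

/-- The polynomial vector field `Σ F_j(z,w) ∂/∂z_j + G(z,w) ∂/∂w` (variables
`0,1,2` are `z₁,z₂,z₃` and variable `3` is `w`) is holomorphic tangent to `M`. -/
def HoloTangent (P Q R : MvPolynomial (Fin 3) ℂ)
    (F : Fin 3 → MvPolynomial (Fin 4) ℂ) (G : MvPolynomial (Fin 4) ℂ) : Prop :=
  ∀ (z : Fin 3 → ℂ) (u : ℝ),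
    eval (Fin.snoc z ((u : ℂ) + Complex.I * Phi P Q R z)) G / (2 * Complex.I) -
      ∑ j, eval (Fin.snoc z ((u : ℂ) + Complex.I * Phi P Q R z)) (F j) * PhiD P Q R j z = 0

/-- `M` is holomorphically nondegenerate. -/
def HoloNondeg (P Q R : MvPolynomial (Fin 3) ℂ) : Prop :=
  ∀ (F : Fin 3 → MvPolynomial (Fin 4) ℂ) (G : MvPolynomial (Fin 4) ℂ),
    HoloTangent P Q R F G → (∀ j, F j = 0) ∧ G = 0

/-!
For fixed `z` a tangency relation is polynomial in `w` and holds on a real line, hence for every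
`w ∈ ℂ`. Writing `X f` for the derivative of `f` along the `∂/∂z` part of `X`, it then reads
`X P · conj Q + X Q · conj P + X R · conj R = G / 2i` on all of `ℂ³ × ℂ`, and since a real-analytic
polynomial identity may be polarized, the conjugated factors are as good as independent variables.
If the Jacobian determinant is nonzero, then `1, P, Q, R` are linearly independent, so the relation
forces `X P = X Q = X R = 0` and `G = 0`: the `∂/∂z` part of `X` lies in the left kernel of the
Jacobian matrix, which is trivial. If the determinant is zero, any nonzero polynomial vector in that
kernel is a tangent field.
-/

section RealPoints

variable {σ τ ι : Type*}

theorem eq_zero_of_eval_ofReal_eq_zero (f : MvPolynomial σ ℂ)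
    (h : ∀ x : σ → ℝ, eval (fun i => (x i : ℂ)) f = 0) : f = 0 := by
  refine MvPolynomial.funext_set (fun _ => Set.range ((↑) : ℝ → ℂ))
    (fun _ => Set.infinite_range_of_injective ofReal_injective) fun z hz => ?_
  choose x hx using fun i => hz i (Set.mem_univ i)
  rw [← funext hx, h x, map_zero]

theorem eval_eval_eq_zero_of_ofReal (f : MvPolynomial σ ℂ) (g : σ → MvPolynomial τ ℂ)
    (h : ∀ x : τ → ℝ, eval (fun i => eval (fun j => (x j : ℂ)) (g i)) f = 0) (z : τ → ℂ) :
    eval (fun i => eval z (g i)) f = 0 := by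
  have eval_bind₁ (v : τ → ℂ) : eval v (bind₁ g f) = eval (fun i => eval v (g i)) f :=
    eval₂Hom_bind₁ _ _ _ _
  have hzero : bind₁ g f = 0 :=
    eq_zero_of_eval_ofReal_eq_zero _ fun x => (eval_bind₁ _).trans (h x)
  rw [← eval_bind₁, hzero, map_zero]

theorem eval_snoc_eq_zero_of_ofReal_add {n : ℕ} (f : MvPolynomial (Fin (n + 1)) ℂ)
    (z : Fin n → ℂ) (a : ℂ) (h : ∀ u : ℝ, eval (Fin.snoc z (u + a) : Fin (n + 1) → ℂ) f = 0)
    (w : ℂ) : eval (Fin.snoc z w : Fin (n + 1) → ℂ) f = 0 := by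
  let line : Fin (n + 1) → MvPolynomial Unit ℂ := Fin.snoc (fun i => C (z i)) (X () + C a)
  have eval_line (t : Unit → ℂ) : (fun i => eval t (line i)) = Fin.snoc z (t () + a) := by
    change eval t ∘ line = _
    rw [Fin.comp_snoc]
    simp [Function.comp_def]
  have hline := eval_eval_eq_zero_of_ofReal f line
    (fun x => by rw [eval_line]; exact h (x ())) fun _ => w - a
  rwa [eval_line, sub_add_cancel] at hline

theorem eq_zero_of_eval_elim_star_eq_zero (f : MvPolynomial (σ ⊕ σ) ℂ)
    (h : ∀ z : σ → ℂ, eval (Sum.elim z (star z)) f = 0) : f = 0 := by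
  -- The complex coordinates `(x, y) ↦ (x + iy, x - iy)` map real points to pairs `(z, conj z)`.
  let coord : σ ⊕ σ → MvPolynomial (σ ⊕ σ) ℂ :=
    Sum.elim (fun i => X (.inl i) + C I * X (.inr i)) (fun i => X (.inl i) - C I * X (.inr i))
  have eval_coord (x y : σ → ℂ) :
      (fun k => eval (Sum.elim x y) (coord k)) = Sum.elim (x + I • y) (x - I • y) := by
    ext (i | i) <;> simp [coord]
  have hcoord (x y : σ → ℂ) : eval (Sum.elim (x + I • y) (x - I • y)) f = 0 := by
    rw [← eval_coord]
    refine eval_eval_eq_zero_of_ofReal f coord (fun v => ?_) _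
    let z : σ → ℂ := fun i => v (.inl i) + I * v (.inr i)
    have eval_coord_real :
        (fun k => eval (fun j => (v j : ℂ)) (coord k)) = Sum.elim z (star z) := by
      ext (i | i) <;> simp [coord, z, sub_eq_add_neg]
    rw [eval_coord_real, h]
  refine MvPolynomial.funext fun v => ?_
  obtain ⟨z, ζ, rfl⟩ : ∃ z ζ, v = Sum.elim z ζ := ⟨_, _, (Sum.elim_comp_inl_inr v).symm⟩
  have hI : I • (1 / (2 * I)) • (z - ζ) = (1 / 2 : ℂ) • (z - ζ) := by
    rw [smul_smul]
    congr 1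
    field_simp
  have hz : z = (1 / 2 : ℂ) • (z + ζ) + I • (1 / (2 * I)) • (z - ζ) := by rw [hI]; module
  have hζ : ζ = (1 / 2 : ℂ) • (z + ζ) - I • (1 / (2 * I)) • (z - ζ) := by rw [hI]; module
  rw [map_zero, ← hcoord ((1 / 2 : ℂ) • (z + ζ)) ((1 / (2 * I)) • (z - ζ)), ← hz, ← hζ]

theorem eval_star_map_starRingEnd (z : σ → ℂ) (f : MvPolynomial σ ℂ) :
    eval (star z) (map (starRingEnd ℂ) f) = starRingEnd ℂ (eval z f) :=
  (map_eval (starRingEnd ℂ) z f).symm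

theorem sum_eval_mul_conj_eval_eq_zero_of_diagonal (s : Finset ι) (a b : ι → MvPolynomial σ ℂ)
    (h : ∀ z : σ → ℂ, ∑ k ∈ s, eval z (a k) * starRingEnd ℂ (eval z (b k)) = 0)
    (z ζ : σ → ℂ) : ∑ k ∈ s, eval z (a k) * starRingEnd ℂ (eval ζ (b k)) = 0 := by
  let H : MvPolynomial (σ ⊕ σ) ℂ :=
    ∑ k ∈ s, rename Sum.inl (a k) * rename Sum.inr (map (starRingEnd ℂ) (b k))
  have eval_H (z ζ : σ → ℂ) : eval (Sum.elim z (star ζ)) H =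
      ∑ k ∈ s, eval z (a k) * starRingEnd ℂ (eval ζ (b k)) := by
    simp only [H, map_sum, map_mul, eval_rename, Sum.elim_comp_inl, Sum.elim_comp_inr,
      eval_star_map_starRingEnd]
  have hzero : H = 0 :=
    eq_zero_of_eval_elim_star_eq_zero H fun z => (eval_H z z).trans (h z)
  rw [← eval_H, hzero, map_zero]

theorem eq_zero_of_linearIndependent_of_sum_eval_mul_conj_eval [Fintype ι]
    {a b : ι → MvPolynomial σ ℂ} (hb : LinearIndependent ℂ b)
    (h : ∀ z : σ → ℂ, ∑ k, eval z (a k) * starRingEnd ℂ (eval z (b k)) = 0) : a = 0 := by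
  have coeff_eq_zero (z : σ → ℂ) : ∀ k, starRingEnd ℂ (eval z (a k)) = 0 := by
    refine Fintype.linearIndependent_iff.1 hb _ (MvPolynomial.funext fun ζ => ?_)
    have hzζ := sum_eval_mul_conj_eval_eq_zero_of_diagonal Finset.univ a b h z ζ
    simpa [smul_eval] using congrArg (starRingEnd ℂ) hzζ
  exact funext fun k => MvPolynomial.funext fun z => by simpa using coeff_eq_zero z k

end RealPoints

section Jacobian

variable {R : Type*} [CommRing R]

/-- The Jacobian matrix of the family `f`; its rows are indexed by the variables and its columns by
the members of `f`. -/
def jacobianMatrix {σ : Type*} (f : σ → MvPolynomial σ R) : Matrix σ σ (MvPolynomial σ R) :=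
  Matrix.of fun i j => pderiv i (f j)

theorem linearIndependent_elim_one_of_det_jacobianMatrix_ne_zero [IsDomain R]
    {σ : Type*} [Fintype σ] [DecidableEq σ] {f : σ → MvPolynomial σ R}
    (hJ : (jacobianMatrix f).det ≠ 0) :
    LinearIndependent R (fun k : Option σ => k.elim 1 f) := by
  refine Fintype.linearIndependent_iff.2 fun c hc => ?_
  simp only [Fintype.sum_option, Option.elim] at hc
  have hker : (fun j => C (c (some j)) : σ → MvPolynomial σ R) = 0 := by
    refine Matrix.eq_zero_of_mulVec_eq_zero hJ (funext fun i => ?_)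
    simpa [jacobianMatrix, Matrix.mulVec, dotProduct, smul_eq_C_mul, mul_comm] using
      congrArg (pderiv i) hc
  have hsome (j : σ) : c (some j) = 0 := by simpa using congrFun hker j
  have hnone : c none = 0 := by simpa [hsome, smul_eq_C_mul] using hc
  exact Option.rec hnone hsome

/-- The derivative of a polynomial `f` in the variables `z` along the `∂/∂z` part
`∑ F_j(z,w) ∂/∂z_j` of a vector field on `(z,w)`-space, the last variable being `w`. -/
def derivAlong {n : ℕ} (F : Fin n → MvPolynomial (Fin (n + 1)) R) (f : MvPolynomial (Fin n) R) :
    MvPolynomial (Fin (n + 1)) R :=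
  ∑ j, F j * rename Fin.castSucc (pderiv j f)

theorem det_jacobianMatrix_eq_zero_iff [IsDomain R] {n : ℕ}
    (f : Fin n → MvPolynomial (Fin n) R) :
    (jacobianMatrix f).det = 0 ↔
      ∃ F : Fin n → MvPolynomial (Fin (n + 1)) R, F ≠ 0 ∧ ∀ k, derivAlong F (f k) = 0 := by
  let φ : MvPolynomial (Fin n) R →+* MvPolynomial (Fin (n + 1)) R :=
    (rename Fin.castSucc : MvPolynomial (Fin n) R →ₐ[R] _).toRingHom
  have hφ : Function.Injective φ := rename_injective _ (Fin.castSucc_injective n)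
  have vecMul_eq (F : Fin n → MvPolynomial (Fin (n + 1)) R) :
      Matrix.vecMul F (φ.mapMatrix (jacobianMatrix f)) = fun k => derivAlong F (f k) := rfl
  rw [← map_eq_zero_iff φ hφ, RingHom.map_det, ← Matrix.exists_vecMul_eq_zero_iff]
  simp only [vecMul_eq, funext_iff, Pi.zero_apply]

end Jacobian

section Tangency

variable {P Q R : MvPolynomial (Fin 3) ℂ} {F : Fin 3 → MvPolynomial (Fin 4) ℂ}
  {G : MvPolynomial (Fin 4) ℂ}

theorem holoTangent_iff_forall_snoc : HoloTangent P Q R F G ↔ ∀ (z : Fin 3 → ℂ) (w : ℂ),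
    eval (Fin.snoc z w : Fin 4 → ℂ) G / (2 * I) -
      ∑ j, eval (Fin.snoc z w : Fin 4 → ℂ) (F j) * PhiD P Q R j z = 0 := by
  refine ⟨fun h z w => ?_, fun h z u => h z _⟩
  let L : MvPolynomial (Fin 4) ℂ := C (1 / (2 * I)) * G - ∑ j, F j * C (PhiD P Q R j z)
  have eval_L (y : Fin 4 → ℂ) :
      eval y L = eval y G / (2 * I) - ∑ j, eval y (F j) * PhiD P Q R j z := by
    simp [L, div_eq_inv_mul]
  rw [← eval_L]
  exact eval_snoc_eq_zero_of_ofReal_add L z (I * Phi P Q R z)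
    (fun u => (eval_L _).trans (h z u)) w

theorem sum_eval_snoc_mul_PhiD (z : Fin 3 → ℂ) (w : ℂ) :
    ∑ j, eval (Fin.snoc z w : Fin 4 → ℂ) (F j) * PhiD P Q R j z =
      eval (Fin.snoc z w : Fin 4 → ℂ) (derivAlong F P) * starRingEnd ℂ (eval z Q) +
      eval (Fin.snoc z w : Fin 4 → ℂ) (derivAlong F Q) * starRingEnd ℂ (eval z P) +
      eval (Fin.snoc z w : Fin 4 → ℂ) (derivAlong F R) * starRingEnd ℂ (eval z R) := by
  simp only [derivAlong, PhiD, map_sum, map_mul, eval_rename, Fin.snoc_comp_castSucc,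
    Finset.sum_mul, ← Finset.sum_add_distrib]
  exact Finset.sum_congr rfl fun j _ => by ring

theorem holoTangent_iff_forall_derivAlong : HoloTangent P Q R F G ↔ ∀ (z : Fin 3 → ℂ) (w : ℂ),
    eval (Fin.snoc z w : Fin 4 → ℂ) (derivAlong F P) * starRingEnd ℂ (eval z Q) +
      eval (Fin.snoc z w : Fin 4 → ℂ) (derivAlong F Q) * starRingEnd ℂ (eval z P) +
      eval (Fin.snoc z w : Fin 4 → ℂ) (derivAlong F R) * starRingEnd ℂ (eval z R) =
      eval (Fin.snoc z w : Fin 4 → ℂ) G / (2 * I) := by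
  simp only [holoTangent_iff_forall_snoc, sum_eval_snoc_mul_PhiD, sub_eq_zero]
  exact forall₂_congr fun _ _ => eq_comm

theorem holoTangent_zero_of_derivAlong_eq_zero
    (h : ∀ k, derivAlong F (![P, Q, R] k) = 0) : HoloTangent P Q R F 0 := by
  have hP : derivAlong F P = 0 := h 0
  have hQ : derivAlong F Q = 0 := h 1
  have hR : derivAlong F R = 0 := h 2
  exact holoTangent_iff_forall_derivAlong.2 fun z w => by simp [hP, hQ, hR]

theorem HoloTangent.derivAlong_eq_zero_and_eq_zero (h : HoloTangent P Q R F G)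
    (hJ : (jacobianMatrix ![P, Q, R]).det ≠ 0) :
    (∀ k, derivAlong F (![P, Q, R] k) = 0) ∧ G = 0 := by
  let a : Option (Fin 3) → MvPolynomial (Fin 4) ℂ := fun k =>
    k.elim (-(C (1 / (2 * I)) * G)) ![derivAlong F Q, derivAlong F P, derivAlong F R]
  let b : Option (Fin 3) → MvPolynomial (Fin 4) ℂ := fun k =>
    rename Fin.castSucc (k.elim 1 ![P, Q, R])
  have hb : LinearIndependent ℂ b :=
    (linearIndependent_elim_one_of_det_jacobianMatrix_ne_zero hJ).map_injOn
      (rename Fin.castSucc).toLinearMap (rename_injective _ (Fin.castSucc_injective 3)).injOn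
  have ha : a = 0 := eq_zero_of_linearIndependent_of_sum_eval_mul_conj_eval hb fun y => by
    have hinit : y ∘ Fin.castSucc = Fin.init y := rfl
    have hy := holoTangent_iff_forall_derivAlong.1 h (Fin.init y) (y (Fin.last 3))
    rw [Fin.snoc_init_self] at hy
    simp only [a, b, Fintype.sum_option, Fin.sum_univ_three, Option.elim, Matrix.cons_val,
      eval_rename, hinit, map_neg, map_mul, map_one, eval_C]
    linear_combination hy
  have hP : derivAlong F P = 0 := congrFun ha (some 1)
  have hQ : derivAlong F Q = 0 := congrFun ha (some 0)
  have hR : derivAlong F R = 0 := congrFun ha (some 2)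
  refine ⟨Fin.forall_fin_succ.2 ⟨hP, Fin.forall_fin_two.2 ⟨hQ, hR⟩⟩, ?_⟩
  simpa [a] using congrFun ha none

end Tangency

theorem stmt6_general (P Q R : MvPolynomial (Fin 3) ℂ) :
    HoloNondeg P Q R ↔ (jacobianMatrix ![P, Q, R]).det ≠ 0 := by
  constructor
  · intro hM hdet
    obtain ⟨F, hF, hkills⟩ := (det_jacobianMatrix_eq_zero_iff _).1 hdet
    exact hF (funext (hM F 0 (holoTangent_zero_of_derivAlong_eq_zero hkills)).1)
  · intro hJ F G hFG
    obtain ⟨hkills, hG⟩ := hFG.derivAlong_eq_zero_and_eq_zero hJ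
    have hF : F = 0 := by_contra fun hF =>
      hJ ((det_jacobianMatrix_eq_zero_iff _).2 ⟨F, hF, hkills⟩)
    exact ⟨congrFun hF, hG⟩

/-- For homogeneous `P, Q, R` with `deg P + deg Q = 2·deg R`, the
model `M = {Im w = P·conj Q + Q·conj P + R·conj R}` is holomorphically nondegenerate
iff the Jacobian determinant `J(P,Q,R)` is not the zero polynomial. -/
theorem stmt6 (P Q R : MvPolynomial (Fin 3) ℂ) (p q r : ℕ)
    (hP : P.IsHomogeneous p) (hQ : Q.IsHomogeneous q) (hR : R.IsHomogeneous r)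
    (hdeg : p + q = 2 * r) :
    HoloNondeg P Q R ↔
      (Matrix.of fun i j => pderiv i (![P, Q, R] j)).det ≠ 0 :=
  stmt6_general P Q R
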